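/- At every point x ∈ U with x ≠ 0, one has Σ_{j=1}^n (∂_j a)(∂_j R) + (n−2) ((x · ∇a)/|x|²) R = (a/2) Σ_{j,k=1}^n ( (∂_k a)(∂_j T^{j,k}) − (∂_j a)(∂_k T^{j,k}) ), where the double sum extends over all pairs j ≠ k (note that since a is radial, (x · ∇a)/|x| equals the radial derivative a′ of a, so the second term on the left is (n−2) a′ R / |x|). -/

import Mathlib

/-- Partial derivative in direction `i` of a function on `ℝⁿ`. -/
noncomputable def pd {n : ℕ} (i : Fin n) (f : EuclideanSpace ℝ (Fin n) → ℝ)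
    (x : EuclideanSpace ℝ (Fin n)) : ℝ :=
  fderiv ℝ f x (EuclideanSpace.single i 1)

/-!
Write `D = ∑ xₖ ∂ₖ` for the Euler field and `Ωⱼₖ = xⱼ ∂ₖ - xₖ ∂ⱼ` for the rotation fields, so that
`T^{j,k} = Ωⱼₖ u` and `R = a D u`. Away from the origin a radial `a` has `∇a = c x` with
`c = D a / |x|²`, so contracting with `∇a` amounts to applying `c D`, and the right-hand side is
`-(a c / 2) ∑ Ωⱼₖ² u`. The decomposition of the Laplacian into radial and angular parts,
`½ ∑ Ωⱼₖ² = |x|² Δ - D² - (n - 2) D`, then makes the difference of the two sides equal to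
`c |x|² (a Δu + ∇a · ∇u) = 0`.
-/

/-- The Euler (radial) derivative `x · ∇f` of `f`, not normalized by `‖x‖`. -/
noncomputable def eulerDeriv {n : ℕ} (f : EuclideanSpace ℝ (Fin n) → ℝ)
    (x : EuclideanSpace ℝ (Fin n)) : ℝ :=
  ∑ k, x k * pd k f x

/-- The derivative of `f` along the field generating rotations of the `(j, k)`-plane, oriented
from the `j`-axis to the `k`-axis. A function is radial when all of these vanish, and the paper's
`T^{j,k}` is `angularDeriv j k u`. -/
noncomputable def angularDeriv {n : ℕ} (j k : Fin n) (f : EuclideanSpace ℝ (Fin n) → ℝ)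
    (x : EuclideanSpace ℝ (Fin n)) : ℝ :=
  x j * pd k f x - x k * pd j f x

section

variable {n : ℕ} {f g a u : EuclideanSpace ℝ (Fin n) → ℝ} {x : EuclideanSpace ℝ (Fin n)} {c : ℝ}

theorem pd_sub (i : Fin n) (hf : DifferentiableAt ℝ f x) (hg : DifferentiableAt ℝ g x) :
    pd i (fun y ↦ f y - g y) x = pd i f x - pd i g x := by
  simp only [pd, fderiv_fun_sub hf hg, sub_apply]

theorem pd_mul (i : Fin n) (hf : DifferentiableAt ℝ f x) (hg : DifferentiableAt ℝ g x) :
    pd i (fun y ↦ f y * g y) x = f x * pd i g x + g x * pd i f x := by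
  simp only [pd, fderiv_fun_mul hf hg, add_apply, smul_apply, smul_eq_mul]

theorem pd_sum {ι : Type*} (s : Finset ι) (i : Fin n) {F : ι → EuclideanSpace ℝ (Fin n) → ℝ}
    (hF : ∀ k ∈ s, DifferentiableAt ℝ (F k) x) :
    pd i (fun y ↦ ∑ k ∈ s, F k y) x = ∑ k ∈ s, pd i (F k) x := by
  simp only [pd, fderiv_fun_sum hF, sum_apply]

theorem differentiableAt_coord (k : Fin n) :
    DifferentiableAt ℝ (fun y : EuclideanSpace ℝ (Fin n) ↦ y k) x :=
  (EuclideanSpace.proj (𝕜 := ℝ) k).differentiableAt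

theorem pd_coord (i k : Fin n) :
    pd i (fun y : EuclideanSpace ℝ (Fin n) ↦ y k) x = if k = i then 1 else 0 := by
  have hproj : fderiv ℝ (fun y : EuclideanSpace ℝ (Fin n) ↦ y k) x = EuclideanSpace.proj k :=
    (EuclideanSpace.proj (𝕜 := ℝ) k).hasFDerivAt.fderiv
  simp [pd, hproj]

theorem differentiableAt_coord_mul (k : Fin n) (hf : DifferentiableAt ℝ f x) :
    DifferentiableAt ℝ (fun y ↦ y k * f y) x :=
  (differentiableAt_coord k).mul hf

theorem pd_coord_mul (i k : Fin n) (hf : DifferentiableAt ℝ f x) :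
    pd i (fun y ↦ y k * f y) x = x k * pd i f x + if k = i then f x else 0 := by
  rw [pd_mul i (differentiableAt_coord k) hf, pd_coord, mul_ite, mul_one, mul_zero]

theorem differentiableAt_pd (hu : ContDiffAt ℝ 2 u x) (k : Fin n) :
    DifferentiableAt ℝ (pd k u) x :=
  ((hu.fderiv_right (m := 1) one_add_one_eq_two.le).differentiableAt one_ne_zero).clm_apply
    (differentiableAt_const _)

theorem differentiableAt_eulerDeriv (hu : ∀ k, DifferentiableAt ℝ (pd k u) x) :
    DifferentiableAt ℝ (eulerDeriv u) x :=
  DifferentiableAt.fun_sum fun k _ ↦ differentiableAt_coord_mul k (hu k)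

theorem eulerDeriv_mul (hf : DifferentiableAt ℝ f x) (hg : DifferentiableAt ℝ g x) :
    eulerDeriv (fun y ↦ f y * g y) x = f x * eulerDeriv g x + g x * eulerDeriv f x := by
  simp only [eulerDeriv, pd_mul _ hf hg, Finset.mul_sum, ← Finset.sum_add_distrib]
  exact Finset.sum_congr rfl fun k _ ↦ by ring

theorem angularDeriv_self (j : Fin n) : angularDeriv j j f x = 0 :=
  sub_self _

theorem pd_eulerDeriv (hu : ∀ k, DifferentiableAt ℝ (pd k u) x) (i : Fin n) :
    pd i (eulerDeriv u) x = ∑ k, x k * pd i (pd k u) x + pd i u x := by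
  calc pd i (eulerDeriv u) x
      = ∑ k, pd i (fun y ↦ y k * pd k u y) x :=
        pd_sum _ i fun k _ ↦ differentiableAt_coord_mul k (hu k)
    _ = ∑ k, x k * pd i (pd k u) x + pd i u x := by
        simp [pd_coord_mul _ _ (hu _), Finset.sum_add_distrib]

theorem eulerDeriv_eulerDeriv (hu : ∀ k, DifferentiableAt ℝ (pd k u) x) :
    eulerDeriv (eulerDeriv u) x = ∑ j, ∑ k, x j * x k * pd j (pd k u) x + eulerDeriv u x := by
  simp only [eulerDeriv, pd_eulerDeriv hu, mul_add, Finset.sum_add_distrib, Finset.mul_sum,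
    mul_assoc]

theorem pd_angularDeriv (hu : ∀ k, DifferentiableAt ℝ (pd k u) x) (i j k : Fin n) :
    pd i (angularDeriv j k u) x
      = (x j * pd i (pd k u) x + if j = i then pd k u x else 0)
        - (x k * pd i (pd j u) x + if k = i then pd j u x else 0) := by
  rw [← pd_coord_mul i j (hu k), ← pd_coord_mul i k (hu j)]
  exact pd_sub i (differentiableAt_coord_mul j (hu k)) (differentiableAt_coord_mul k (hu j))

/-- Grouped as a term plus its image under `j ↔ k`, so that both contribute equally to the sum over
all pairs. -/
theorem angularDeriv_angularDeriv (hu : ∀ k, DifferentiableAt ℝ (pd k u) x) (j k : Fin n) :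
    angularDeriv j k (angularDeriv j k u) x
      = (x j ^ 2 * pd k (pd k u) x - x k * x j * pd k (pd j u) x - x j * pd j u x
          + if j = k then x j * pd j u x else 0)
        + (x k ^ 2 * pd j (pd j u) x - x j * x k * pd j (pd k u) x - x k * pd k u x
          + if k = j then x k * pd k u x else 0) := by
  rw [angularDeriv, pd_angularDeriv hu, pd_angularDeriv hu]
  rcases eq_or_ne j k with rfl | hjk
  · simp only [if_true]
    ring
  · simp only [hjk, hjk.symm, if_true, if_false]
    ring

theorem sum_angularDeriv_angularDeriv (hu : ∀ k, DifferentiableAt ℝ (pd k u) x) :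
    ∑ j, ∑ k, angularDeriv j k (angularDeriv j k u) x
      = 2 * (‖x‖ ^ 2 * ∑ i, pd i (pd i u) x - eulerDeriv (eulerDeriv u) x
          - (n - 2) * eulerDeriv u x) := by
  let S (j k : Fin n) : ℝ :=
    x k ^ 2 * pd j (pd j u) x - x j * x k * pd j (pd k u) x - x k * pd k u x
      + if k = j then x k * pd k u x else 0
  have sum_S : ∑ j, ∑ k, S j k
      = ‖x‖ ^ 2 * ∑ i, pd i (pd i u) x - eulerDeriv (eulerDeriv u) x
          - (n - 2) * eulerDeriv u x := by
    have sum_sq : ∑ j, ∑ k, x k ^ 2 * pd j (pd j u) x = ‖x‖ ^ 2 * ∑ i, pd i (pd i u) x := by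
      rw [EuclideanSpace.real_norm_sq_eq, Finset.sum_mul_sum, Finset.sum_comm]
    have sum_euler : ∑ _j : Fin n, ∑ k, x k * pd k u x = n * eulerDeriv u x := by
      simp [eulerDeriv]
    have sum_diag : ∑ j, ∑ k, (if k = j then x k * pd k u x else 0) = eulerDeriv u x := by
      simp [eulerDeriv]
    simp only [S, Finset.sum_add_distrib, Finset.sum_sub_distrib]
    rw [sum_sq, sum_euler, sum_diag, eulerDeriv_eulerDeriv hu]
    ring
  calc ∑ j, ∑ k, angularDeriv j k (angularDeriv j k u) x
      = ∑ j, ∑ k, S k j + ∑ j, ∑ k, S j k := by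
        simp only [angularDeriv_angularDeriv hu, S, Finset.sum_add_distrib]
    _ = 2 * ∑ j, ∑ k, S j k := by rw [Finset.sum_comm, two_mul]
    _ = _ := by rw [sum_S]

theorem pd_eq_mul_of_angularDeriv_eq_zero (hx : x ≠ 0) (ha : ∀ j k, angularDeriv j k a x = 0)
    (k : Fin n) : pd k a x = eulerDeriv a x / ‖x‖ ^ 2 * x k := by
  have norm_sq_ne_zero : ‖x‖ ^ 2 ≠ 0 := pow_ne_zero 2 (norm_ne_zero_iff.mpr hx)
  rw [div_mul_eq_mul_div, eq_div_iff norm_sq_ne_zero, EuclideanSpace.real_norm_sq_eq, eulerDeriv,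
    Finset.mul_sum, Finset.sum_mul]
  refine Finset.sum_congr rfl fun j _ ↦ ?_
  have cross : x j * pd k a x = x k * pd j a x := sub_eq_zero.mp (ha j k)
  linear_combination x j * cross

theorem sum_pd_mul_pd_eq_mul_eulerDeriv (ha : ∀ k, pd k a x = c * x k) :
    ∑ j, pd j a x * pd j f x = c * eulerDeriv f x := by
  simp only [ha, eulerDeriv, Finset.mul_sum, mul_assoc]

theorem pd_mul_pd_sub_pd_mul_pd_eq_mul_angularDeriv (ha : ∀ k, pd k a x = c * x k) (j k : Fin n) :
    pd k a x * pd j f x - pd j a x * pd k f x = -c * angularDeriv j k f x := by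
  rw [ha, ha, angularDeriv]
  ring

theorem sum_offDiag_eq_mul_sum_angularDeriv (ha : ∀ k, pd k a x = c * x k)
    (F : Fin n → Fin n → EuclideanSpace ℝ (Fin n) → ℝ) :
    (∑ j, ∑ k, if j = k then 0 else pd k a x * pd j (F j k) x - pd j a x * pd k (F j k) x)
      = -c * ∑ j, ∑ k, angularDeriv j k (F j k) x := by
  simp only [Finset.mul_sum, pd_mul_pd_sub_pd_mul_pd_eq_mul_angularDeriv ha]
  refine Finset.sum_congr rfl fun j _ ↦ Finset.sum_congr rfl fun k _ ↦ ite_eq_right_iff.mpr ?_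
  rintro rfl
  rw [angularDeriv_self, mul_zero]

end

theorem stmt12_general {n : ℕ} {a u : EuclideanSpace ℝ (Fin n) → ℝ}
    {x : EuclideanSpace ℝ (Fin n)} (hx : x ≠ 0)
    (ha : DifferentiableAt ℝ a x) (hu : ContDiffAt ℝ 2 u x)
    (hrad : ∀ j k, x j * pd k a x - x k * pd j a x = 0)
    (heq : a x * (∑ i, pd i (pd i u) x) + ∑ i, pd i a x * pd i u x = 0)
    {T : Fin n → Fin n → EuclideanSpace ℝ (Fin n) → ℝ}
    (hT : ∀ j k y, T j k y = -(y k) * pd j u y + y j * pd k u y)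
    {R : EuclideanSpace ℝ (Fin n) → ℝ} (hR : ∀ y, R y = a y * ∑ k, y k * pd k u y) :
    (∑ j, pd j a x * pd j R x)
        + ((n : ℝ) - 2) * ((∑ i, x i * pd i a x) / ‖x‖ ^ 2) * R x
      = (a x / 2) * ∑ j, ∑ k,
          if j = k then 0
          else pd k a x * pd j (T j k) x - pd j a x * pd k (T j k) x := by
  obtain rfl : T = fun j k ↦ angularDeriv j k u := by
    funext j k y
    rw [hT, angularDeriv, neg_mul, neg_add_eq_sub]
  obtain rfl : R = fun y ↦ a y * eulerDeriv u y := funext hR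
  have hpd := differentiableAt_pd hu
  change _ + (_ - 2) * (eulerDeriv a x / ‖x‖ ^ 2) * _ = _
  set c := eulerDeriv a x / ‖x‖ ^ 2
  have grad_a : ∀ k, pd k a x = c * x k := pd_eq_mul_of_angularDeriv_eq_zero hx hrad
  have euler_a : eulerDeriv a x = c * ‖x‖ ^ 2 :=
    (div_mul_cancel₀ _ (pow_ne_zero 2 (norm_ne_zero_iff.mpr hx))).symm
  have pde : a x * ∑ i, pd i (pd i u) x + c * eulerDeriv u x = 0 := by
    rwa [sum_pd_mul_pd_eq_mul_eulerDeriv grad_a] at heq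
  rw [sum_pd_mul_pd_eq_mul_eulerDeriv grad_a, sum_offDiag_eq_mul_sum_angularDeriv grad_a,
    sum_angularDeriv_angularDeriv hpd, eulerDeriv_mul ha (differentiableAt_eulerDeriv hpd)]
  linear_combination c * ‖x‖ ^ 2 * pde + c * eulerDeriv u x * euler_a

/-- Section 5: at every `x ∈ U` with `x ≠ 0`,
`∑_j a_j R_j + (n−2) ((x·∇a)/|x|²) R = (a/2) ∑_{j ≠ k} (a_k (T^{j,k})_j − a_j (T^{j,k})_k)`,
in any dimension `n ≥ 2`. -/
theorem stmt12 (n : ℕ) (hn : 2 ≤ n)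
    (U : Set (EuclideanSpace ℝ (Fin n))) (hU : IsOpen U)
    (a u : EuclideanSpace ℝ (Fin n) → ℝ)
    (ha : ContDiffOn ℝ (⊤ : ℕ∞) a U) (hapos : ∀ x ∈ U, 0 < a x)
    (hrad : ∀ (j k : Fin n), ∀ x ∈ U, x j * pd k a x - x k * pd j a x = 0)
    (hu : ContDiffOn ℝ (⊤ : ℕ∞) u U)
    (heq : ∀ x ∈ U, a x * (∑ i, pd i (pd i u) x) + ∑ i, pd i a x * pd i u x = 0)
    (T : Fin n → Fin n → EuclideanSpace ℝ (Fin n) → ℝ)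
    (hT : ∀ j k x, T j k x = -(x k) * pd j u x + x j * pd k u x)
    (R : EuclideanSpace ℝ (Fin n) → ℝ)
    (hR : ∀ x, R x = a x * ∑ k, x k * pd k u x) :
    ∀ x ∈ U, x ≠ 0 →
      (∑ j, pd j a x * pd j R x)
        + ((n : ℝ) - 2) * ((∑ i, x i * pd i a x) / ‖x‖ ^ 2) * R x
      = (a x / 2) * ∑ j, ∑ k,
          if j = k then 0
          else pd k a x * pd j (T j k) x - pd j a x * pd k (T j k) x :=
  fun x hx hx0 ↦ stmt12_general hx0 ((ha.contDiffAt (hU.mem_nhds hx)).differentiableAt (by simp))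
    (contDiffAt_infty.mp (hu.contDiffAt (hU.mem_nhds hx)) 2) (hrad · · x hx) (heq x hx) hT hR
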